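/- arXiv:2401.04888 — 2 statements merged into one kernel-verified Lean document; each statement's English description precedes it below -/
import Mathlib

section
/- Let u : [0,T] × ℝ² → ℝ² be a C² solution of the two-dimensional inviscid Burgers equation ∂ₜu + (u·∇)u = 0 such that u(t,·) is curl-free (∂₁u² = ∂₂u¹) for every t, and let δ = ∇·u. Let a ∈ ℝ² and let X : [0,T] → ℝ² be a C¹ curve with X'(t) = u(t,X(t)) and X(0) = a. Then for every t ∈ [0,T], δ(t, X(t)) = δ(0,a) − ∫₀ᵗ |∇u(s, X(s))|² ds. In particular, t ↦ δ(t, X(t)) is nonincreasing on [0,T], and if δ(0,a) < 0 then δ(t, X(t)) < 0 for all t ∈ [0,T]. -/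
/-!
Write a solution as a map of `p = (t, x)`, and let `D` be its full space-time derivative. For each
component `φ` of `u`, Burgers' equation says `Dφ(t,x)(1, u(t,x)) = 0` for all `x`. Differentiating
this in a spatial direction `v` gives `D²φ(0,v)(1,u) + Dφ(0, ∂ᵥu) = 0`. Since `φ` is C², the second
derivative is symmetric, so along a trajectory the derivative of `∂ᵥφ(t, X(t))`, which is
`D²φ(1,u)(0,v)`, equals `-Dφ(0, ∂ᵥu)` (`hasDerivAt_fderiv_trajectory`).

Adding the cases `φ = u¹, v = e₁` and `φ = u², v = e₂` shows that `δ(t, X(t))` has derivative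
`-((∂₁u¹)² + 2 ∂₁u² ∂₂u¹ + (∂₂u²)²)`, which is `-|∇u|²` by the curl-free condition
(`hasDerivAt_divg_trajectory`). The integral formula is then the fundamental theorem of calculus,
and the two qualitative claims follow from `|∇u|² ≥ 0`.
-/

open Real MeasureTheory Set intervalIntegral
open scoped Real Classical

noncomputable section

/-- Partial derivative in the first spatial coordinate. -/
def pd1 (f : ℝ × ℝ → ℝ) (x : ℝ × ℝ) : ℝ := deriv (fun s => f (s, x.2)) x.1

/-- Partial derivative in the second spatial coordinate. -/
def pd2 (f : ℝ × ℝ → ℝ) (x : ℝ × ℝ) : ℝ := deriv (fun s => f (x.1, s)) x.2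

/-- Advective derivative `(v·∇)f = v¹ ∂₁f + v² ∂₂f`. -/
def adv (v : ℝ × ℝ → ℝ × ℝ) (f : ℝ × ℝ → ℝ) (x : ℝ × ℝ) : ℝ :=
  (v x).1 * pd1 f x + (v x).2 * pd2 f x

/-- Divergence `∇·v = ∂₁v¹ + ∂₂v²`. -/
def divg (v : ℝ × ℝ → ℝ × ℝ) (x : ℝ × ℝ) : ℝ :=
  pd1 (fun y => (v y).1) x + pd2 (fun y => (v y).2) x

/-- Scalar curl `∇⊥·v = ∂₁v² − ∂₂v¹`. -/
def curl2 (v : ℝ × ℝ → ℝ × ℝ) (x : ℝ × ℝ) : ℝ :=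
  pd1 (fun y => (v y).2) x - pd2 (fun y => (v y).1) x

/-- Laplacian `Δf = ∂₁²f + ∂₂²f`. -/
def lap (f : ℝ × ℝ → ℝ) : ℝ × ℝ → ℝ := fun x => pd1 (pd1 f) x + pd2 (pd2 f) x

/-- `|∇v|² = Σ_{i,j} (∂ᵢvʲ)²`. -/
def gradNormSq (v : ℝ × ℝ → ℝ × ℝ) (x : ℝ × ℝ) : ℝ :=
  (pd1 (fun y => (v y).1) x)^2 + (pd2 (fun y => (v y).1) x)^2 +
  (pd1 (fun y => (v y).2) x)^2 + (pd2 (fun y => (v y).2) x)^2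

/-- The periodic box `Ω = [0,2π]²`. -/
def Omega2 : Set (ℝ × ℝ) := Set.Icc (0:ℝ) (2*π) ×ˢ Set.Icc (0:ℝ) (2*π)

/-- `2π`-periodicity in each coordinate for a vector field. -/
def Periodic2 (f : ℝ × ℝ → ℝ × ℝ) : Prop :=
  ∀ x : ℝ × ℝ, f (x.1 + 2*π, x.2) = f x ∧ f (x.1, x.2 + 2*π) = f x

/-- Squared `L²(Ω)` norm of a vector field. -/
def l2sq (v : ℝ × ℝ → ℝ × ℝ) : ℝ := ∫ x in Omega2, ((v x).1^2 + (v x).2^2)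

/-- Squared `L²(Ω)` norm of `Δv`. -/
def l2sqLap (v : ℝ × ℝ → ℝ × ℝ) : ℝ :=
  ∫ x in Omega2, ((lap (fun y => (v y).1) x)^2 + (lap (fun y => (v y).2) x)^2)

/-- `ℓ`-th Fourier coefficient of a scalar field. -/
def fc (f : ℝ × ℝ → ℝ) (ℓ : ℤ × ℤ) : ℂ :=
  ((2*π)^2)⁻¹ • ∫ x in Omega2,
    (f x : ℂ) * Complex.exp (-(Complex.I) * ((ℓ.1:ℂ) * (x.1:ℂ) + (ℓ.2:ℂ) * (x.2:ℂ)))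

/-- `ℓ`-th Fourier coefficient of a vector field. -/
def fcVec (v : ℝ × ℝ → ℝ × ℝ) (ℓ : ℤ × ℤ) : ℂ × ℂ :=
  (fc (fun y => (v y).1) ℓ, fc (fun y => (v y).2) ℓ)

/-- `|v̂_ℓ|²`. -/
def coefAbsSq (v : ℝ × ℝ → ℝ × ℝ) (ℓ : ℤ × ℤ) : ℝ :=
  ‖fc (fun y => (v y).1) ℓ‖^2 + ‖fc (fun y => (v y).2) ℓ‖^2

/-- Squared homogeneous Sobolev norm `‖v‖²_{Ḣ^κ} = (2π)² Σ_{ℓ≠0} |ℓ|^{2κ}|v̂_ℓ|²`. -/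
def hnormSq (v : ℝ × ℝ → ℝ × ℝ) (κ : ℝ) : ℝ :=
  (2*π)^2 * ∑' ℓ : ℤ × ℤ,
    if ℓ = 0 then 0 else ((ℓ.1:ℝ)^2 + (ℓ.2:ℝ)^2) ^ κ * coefAbsSq v ℓ

/-- Homogeneous Sobolev norm `‖v‖_{Ḣ^κ}`. -/
def hnorm (v : ℝ × ℝ → ℝ × ℝ) (κ : ℝ) : ℝ := Real.sqrt (hnormSq v κ)

/-- Projection onto Fourier modes with `|ℓ| ≤ N` (scalar fields). -/
def PN (N : ℝ) (f : ℝ × ℝ → ℝ) (x : ℝ × ℝ) : ℝ :=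
  ∑' ℓ : ℤ × ℤ,
    if ((ℓ.1:ℝ)^2 + (ℓ.2:ℝ)^2) ≤ N^2 then
      (fc f ℓ * Complex.exp (Complex.I * ((ℓ.1:ℂ) * (x.1:ℂ) + (ℓ.2:ℂ) * (x.2:ℂ)))).re
    else 0

/-- Projection onto Fourier modes with `|ℓ| ≤ N` (vector fields). -/
def PNvec (N : ℝ) (v : ℝ × ℝ → ℝ × ℝ) (x : ℝ × ℝ) : ℝ × ℝ :=
  (PN N (fun y => (v y).1) x, PN N (fun y => (v y).2) x)

/-- High-mode part `(I − P_N)v`. -/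
def highN (N : ℝ) (v : ℝ × ℝ → ℝ × ℝ) (x : ℝ × ℝ) : ℝ × ℝ := v x - PNvec N v x

/-- `(v·∇)w` as a vector field. -/
def advVec (v w : ℝ × ℝ → ℝ × ℝ) (x : ℝ × ℝ) : ℝ × ℝ :=
  (adv v (fun y => (w y).1) x, adv v (fun y => (w y).2) x)

/-- Laplacian of a vector field. -/
def lapVec (v : ℝ × ℝ → ℝ × ℝ) (x : ℝ × ℝ) : ℝ × ℝ :=
  (lap (fun y => (v y).1) x, lap (fun y => (v y).2) x)

/-- Spatial mean `(2π)⁻² ∫_Ω v`. -/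
def meanOf (v : ℝ × ℝ → ℝ × ℝ) : ℝ × ℝ := ((2*π)^2)⁻¹ • ∫ x in Omega2, v x

/-- Joint smoothness in `(t,x)`. -/
def SmoothTS (u : ℝ → ℝ × ℝ → ℝ × ℝ) : Prop :=
  ∀ n : ℕ, ContDiff ℝ n (fun p : ℝ × (ℝ × ℝ) => u p.1 p.2)

/-- The 2D inviscid Burgers equation `∂ₜu + (u·∇)u = 0` on `[0,T] × ℝ²`. -/
def IsBurgers (T : ℝ) (u : ℝ → ℝ × ℝ → ℝ × ℝ) : Prop :=
  ∀ t ∈ Set.Icc (0:ℝ) T, ∀ x : ℝ × ℝ,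
    deriv (fun s => (u s x).1) t + adv (u t) (fun y => (u t y).1) x = 0 ∧
    deriv (fun s => (u s x).2) t + adv (u t) (fun y => (u t y).2) x = 0

/-- The 2D Kuramoto–Sivashinsky equation `∂ₜu + (u·∇)u = −Δ²u − λΔu` on `[0,T] × ℝ²`. -/
def IsKSE (lam T : ℝ) (u : ℝ → ℝ × ℝ → ℝ × ℝ) : Prop :=
  ∀ t ∈ Set.Icc (0:ℝ) T, ∀ x : ℝ × ℝ,
    deriv (fun s => (u s x).1) t + adv (u t) (fun y => (u t y).1) x
      = -(lap (lap (fun y => (u t y).1)) x) - lam * lap (fun y => (u t y).1) x ∧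
    deriv (fun s => (u s x).2) t + adv (u t) (fun y => (u t y).2) x
      = -(lap (lap (fun y => (u t y).2)) x) - lam * lap (fun y => (u t y).2) x

/-- A field `φ` that is transported by `w` at the fixed time `t` satisfies
`Dₜ(∂ᵥφ) = -(∂ᵥw · ∇)φ` along a trajectory of `w`. -/
lemma hasDerivAt_fderiv_trajectory {φ : ℝ × (ℝ × ℝ) → ℝ} {w : ℝ × (ℝ × ℝ) → ℝ × ℝ}
    (hφ : ContDiff ℝ 2 φ) (hw : Differentiable ℝ w) {t : ℝ}
    (hzero : ∀ x, fderiv ℝ φ (t, x) (1, w (t, x)) = 0)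
    {X : ℝ → ℝ × ℝ} (hX : HasDerivAt X (w (t, X t)) t) (v : ℝ × ℝ) :
    HasDerivAt (fun s => fderiv ℝ φ (s, X s) (0, v))
      (-(fderiv ℝ φ (t, X t) (0, fderiv ℝ w (t, X t) (0, v)))) t := by
  have hD : Differentiable ℝ (fderiv ℝ φ) :=
    (hφ.fderiv_right (m := 1) (by norm_num)).differentiable (by norm_num)
  have hsymm : IsSymmSndFDerivAt ℝ φ (t, X t) :=
    hφ.contDiffAt.isSymmSndFDerivAt (by simp)
  have hpath : HasDerivAt (fun s => (s, X s)) ((1 : ℝ), w (t, X t)) t :=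
    (hasDerivAt_id t).prodMk hX
  have h1 : HasDerivAt (fun s => fderiv ℝ φ (s, X s) (0, v))
      (fderiv ℝ (fderiv ℝ φ) (t, X t) (1, w (t, X t)) (0, v)) t := by
    have h := (hD (t, X t)).hasFDerivAt.comp_hasDerivAt t hpath
    simpa using h.clm_apply (hasDerivAt_const t ((0 : ℝ), v))
  -- The transport equation is differentiated along the line `r ↦ (t, X t + r • v)`.
  have hline : HasDerivAt (fun r : ℝ => (t, X t + r • v)) ((0 : ℝ), v) 0 := by
    have h : HasDerivAt (fun r : ℝ => X t + r • v) v 0 := by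
      simpa using ((hasDerivAt_id (0 : ℝ)).smul_const v).const_add (X t)
    exact (hasDerivAt_const (0 : ℝ) t).prodMk h
  have hq : (t, X t) = (t, X t + (0 : ℝ) • v) := by simp
  have h2 : HasDerivAt (fun r : ℝ => fderiv ℝ φ (t, X t + r • v) (1, w (t, X t + r • v)))
      (fderiv ℝ (fderiv ℝ φ) (t, X t) (0, v) (1, w (t, X t))
        + fderiv ℝ φ (t, X t) (0, fderiv ℝ w (t, X t) (0, v))) 0 := by
    have ha : HasDerivAt (fun r : ℝ => fderiv ℝ φ (t, X t + r • v))
        (fderiv ℝ (fderiv ℝ φ) (t, X t) (0, v)) 0 :=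
      HasFDerivAt.comp_hasDerivAt (0 : ℝ) (by rw [← hq]; exact (hD _).hasFDerivAt) hline
    have hb : HasDerivAt (fun r : ℝ => w (t, X t + r • v))
        (fderiv ℝ w (t, X t) (0, v)) 0 :=
      HasFDerivAt.comp_hasDerivAt (0 : ℝ) (by rw [← hq]; exact (hw _).hasFDerivAt) hline
    simpa using ha.clm_apply ((hasDerivAt_const (0 : ℝ) (1 : ℝ)).prodMk hb)
  have h3 : fderiv ℝ (fderiv ℝ φ) (t, X t) (0, v) (1, w (t, X t))
        + fderiv ℝ φ (t, X t) (0, fderiv ℝ w (t, X t) (0, v)) = 0 := by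
    simp only [hzero] at h2
    exact h2.unique (hasDerivAt_const _ _)
  rw [hsymm.eq (1, w (t, X t)) (0, v)] at h1
  rwa [eq_neg_of_add_eq_zero_left h3] at h1

lemma pd1_eq_fderiv {φ : ℝ × (ℝ × ℝ) → ℝ} (hφ : Differentiable ℝ φ) (t : ℝ) (x : ℝ × ℝ) :
    pd1 (fun y => φ (t, y)) x = fderiv ℝ φ (t, x) (0, (1, 0)) := by
  have h : HasDerivAt (fun s : ℝ => (t, (s, x.2))) ((0 : ℝ), ((1 : ℝ), (0 : ℝ))) x.1 :=
    (hasDerivAt_const _ _).prodMk ((hasDerivAt_id _).prodMk (hasDerivAt_const _ _))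
  exact ((hφ (t, x)).hasFDerivAt.comp_hasDerivAt x.1 h).deriv

lemma pd2_eq_fderiv {φ : ℝ × (ℝ × ℝ) → ℝ} (hφ : Differentiable ℝ φ) (t : ℝ) (x : ℝ × ℝ) :
    pd2 (fun y => φ (t, y)) x = fderiv ℝ φ (t, x) (0, (0, 1)) := by
  have h : HasDerivAt (fun s : ℝ => (t, (x.1, s))) ((0 : ℝ), ((0 : ℝ), (1 : ℝ))) x.2 :=
    (hasDerivAt_const _ _).prodMk ((hasDerivAt_const _ _).prodMk (hasDerivAt_id _))
  exact ((hφ (t, x)).hasFDerivAt.comp_hasDerivAt x.2 h).deriv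

lemma deriv_time_eq_fderiv {φ : ℝ × (ℝ × ℝ) → ℝ} (hφ : Differentiable ℝ φ) (t : ℝ)
    (x : ℝ × ℝ) : deriv (fun s => φ (s, x)) t = fderiv ℝ φ (t, x) (1, 0) := by
  have h : HasDerivAt (fun s : ℝ => (s, x)) ((1 : ℝ), (0 : ℝ × ℝ)) t :=
    (hasDerivAt_id _).prodMk (hasDerivAt_const _ _)
  exact ((hφ (t, x)).hasFDerivAt.comp_hasDerivAt t h).deriv

lemma map_eq_sum_spatial (L : ℝ × (ℝ × ℝ) →L[ℝ] ℝ) (c b d : ℝ) :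
    L (c, (b, d)) = c * L (1, 0) + (b * L (0, (1, 0)) + d * L (0, (0, 1))) := by
  have h : ((c, (b, d)) : ℝ × (ℝ × ℝ))
      = c • (1, 0) + (b • (0, (1, 0)) + d • (0, (0, 1))) := by
    ext <;> simp
  rw [h]
  simp only [map_add, map_smul, smul_eq_mul]

/-- The Lagrangian form of the divergence equation: `Dₜδ = -|∇u|²`. -/
lemma hasDerivAt_divg_trajectory {T : ℝ} {u : ℝ → ℝ × ℝ → ℝ × ℝ}
    (hreg : ContDiff ℝ 2 (fun p : ℝ × (ℝ × ℝ) => u p.1 p.2))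
    (hB : IsBurgers T u)
    (hcf : ∀ t ∈ Set.Icc (0:ℝ) T, ∀ x : ℝ × ℝ,
      pd1 (fun y => (u t y).2) x = pd2 (fun y => (u t y).1) x)
    {X : ℝ → ℝ × ℝ} {t : ℝ} (ht : t ∈ Set.Icc (0:ℝ) T)
    (hX : HasDerivAt X (u t (X t)) t) :
    HasDerivAt (fun s => divg (u s) (X s)) (-gradNormSq (u t) (X t)) t := by
  set w : ℝ × (ℝ × ℝ) → ℝ × ℝ := fun p => u p.1 p.2 with hwdef
  set f : ℝ × (ℝ × ℝ) → ℝ := fun p => (u p.1 p.2).1 with hfdef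
  set g : ℝ × (ℝ × ℝ) → ℝ := fun p => (u p.1 p.2).2 with hgdef
  have hf : ContDiff ℝ 2 f := hreg.fst
  have hg : ContDiff ℝ 2 g := hreg.snd
  have hwd : Differentiable ℝ w := hreg.differentiable (by norm_num)
  have hfd : Differentiable ℝ f := hf.differentiable (by norm_num)
  have hgd : Differentiable ℝ g := hg.differentiable (by norm_num)
  have f1 : ∀ s x, pd1 (fun y => (u s y).1) x = fderiv ℝ f (s, x) (0, (1, 0)) :=
    pd1_eq_fderiv hfd
  have f2 : ∀ s x, pd2 (fun y => (u s y).1) x = fderiv ℝ f (s, x) (0, (0, 1)) :=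
    pd2_eq_fderiv hfd
  have g1 : ∀ s x, pd1 (fun y => (u s y).2) x = fderiv ℝ g (s, x) (0, (1, 0)) :=
    pd1_eq_fderiv hgd
  have g2 : ∀ s x, pd2 (fun y => (u s y).2) x = fderiv ℝ g (s, x) (0, (0, 1)) :=
    pd2_eq_fderiv hgd
  have hfz : ∀ x, fderiv ℝ f (t, x) (1, w (t, x)) = 0 := by
    intro x
    have h := (hB t ht x).1
    have h0 : deriv (fun s => (u s x).1) t = _ := deriv_time_eq_fderiv hfd t x
    rw [adv, f1, f2, h0] at h
    have h' := map_eq_sum_spatial (fderiv ℝ f (t, x)) 1 (u t x).1 (u t x).2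
    rw [one_mul, h] at h'
    exact h'
  have hgz : ∀ x, fderiv ℝ g (t, x) (1, w (t, x)) = 0 := by
    intro x
    have h := (hB t ht x).2
    have h0 : deriv (fun s => (u s x).2) t = _ := deriv_time_eq_fderiv hgd t x
    rw [adv, g1, g2, h0] at h
    have h' := map_eq_sum_spatial (fderiv ℝ g (t, x)) 1 (u t x).1 (u t x).2
    rw [one_mul, h] at h'
    exact h'
  have hwv : ∀ p e, fderiv ℝ w p e = (fderiv ℝ f p e, fderiv ℝ g p e) := by
    intro p e
    have h : HasFDerivAt w ((fderiv ℝ f p).prod (fderiv ℝ g p)) p :=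
      (hfd p).hasFDerivAt.prodMk (hgd p).hasFDerivAt
    rw [h.fderiv]
    rfl
  have hc := hcf t ht (X t)
  rw [g1, f2] at hc
  have hsum := (hasDerivAt_fderiv_trajectory hf hwd hfz hX (1, 0)).add
    (hasDerivAt_fderiv_trajectory hg hwd hgz hX (0, 1))
  rw [hwv, hwv, map_eq_sum_spatial (fderiv ℝ f _) 0 (fderiv ℝ f _ _),
    map_eq_sum_spatial (fderiv ℝ g _) 0 (fderiv ℝ f _ _)] at hsum
  have hfun : (fun s => divg (u s) (X s)) = (fun s => fderiv ℝ f (s, X s) (0, (1, 0)))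
      + fun s => fderiv ℝ g (s, X s) (0, (0, 1)) := by
    funext s
    simp only [divg, f1, g2, Pi.add_apply]
  rw [hfun]
  refine hsum.congr_deriv ?_
  simp only [gradNormSq, f1, f2, g1, g2]
  rw [hc]
  ring

lemma gradNormSq_nonneg (v : ℝ × ℝ → ℝ × ℝ) (x : ℝ × ℝ) : 0 ≤ gradNormSq v x := by
  unfold gradNormSq
  positivity

lemma continuousOn_gradNormSq_trajectory {u : ℝ → ℝ × ℝ → ℝ × ℝ}
    (hreg : ContDiff ℝ 2 (fun p : ℝ × (ℝ × ℝ) => u p.1 p.2))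
    {X : ℝ → ℝ × ℝ} {S : Set ℝ} (hX : ContinuousOn X S) :
    ContinuousOn (fun s => gradNormSq (u s) (X s)) S := by
  have hpath : ContinuousOn (fun s => (s, X s)) S := continuousOn_id.prodMk hX
  have key : ∀ φ : ℝ × (ℝ × ℝ) → ℝ, ContDiff ℝ 2 φ → ∀ e,
      ContinuousOn (fun s => fderiv ℝ φ (s, X s) e) S := fun φ hφ e =>
    (((hφ.continuous_fderiv (by norm_num)).comp_continuousOn hpath)).clm_apply
      continuousOn_const
  have hfd := hreg.fst.differentiable (by norm_num)
  have hgd := hreg.snd.differentiable (by norm_num)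
  have heq : (fun s => gradNormSq (u s) (X s)) = fun s =>
      (fderiv ℝ (fun p : ℝ × (ℝ × ℝ) => (u p.1 p.2).1) (s, X s) (0, (1, 0))) ^ 2
      + (fderiv ℝ (fun p : ℝ × (ℝ × ℝ) => (u p.1 p.2).1) (s, X s) (0, (0, 1))) ^ 2
      + (fderiv ℝ (fun p : ℝ × (ℝ × ℝ) => (u p.1 p.2).2) (s, X s) (0, (1, 0))) ^ 2
      + (fderiv ℝ (fun p : ℝ × (ℝ × ℝ) => (u p.1 p.2).2) (s, X s) (0, (0, 1))) ^ 2 := by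
    funext s
    rw [← pd1_eq_fderiv hfd, ← pd2_eq_fderiv hfd, ← pd1_eq_fderiv hgd, ← pd2_eq_fderiv hgd]
    rfl
  rw [heq]
  exact ((((key _ hreg.fst _).pow 2).add ((key _ hreg.fst _).pow 2)).add
    ((key _ hreg.snd _).pow 2)).add ((key _ hreg.snd _).pow 2)

/-- Along a Lagrangian trajectory of a C² curl-free solution of the
2D inviscid Burgers equation, `δ(t,X(t)) = δ(0,a) − ∫₀ᵗ |∇u(s,X(s))|² ds`; in particular
`t ↦ δ(t,X(t))` is nonincreasing on `[0,T]`, and if `δ(0,a) < 0` then `δ(t,X(t)) < 0`. -/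
theorem stmt4 (T : ℝ) (hT : 0 ≤ T) (u : ℝ → ℝ × ℝ → ℝ × ℝ)
    (hreg : ContDiff ℝ 2 (fun p : ℝ × (ℝ × ℝ) => u p.1 p.2))
    (hB : IsBurgers T u)
    (hcf : ∀ t ∈ Set.Icc (0:ℝ) T, ∀ x : ℝ × ℝ,
      pd1 (fun y => (u t y).2) x = pd2 (fun y => (u t y).1) x)
    (a : ℝ × ℝ) (X : ℝ → ℝ × ℝ)
    (hX : ∀ t ∈ Set.Icc (0:ℝ) T, HasDerivAt X (u t (X t)) t)
    (hX0 : X 0 = a) :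
    (∀ t ∈ Set.Icc (0:ℝ) T,
        divg (u t) (X t)
          = divg (u 0) a - ∫ s in (0:ℝ)..t, gradNormSq (u s) (X s)) ∧
    AntitoneOn (fun t => divg (u t) (X t)) (Set.Icc (0:ℝ) T) ∧
    (divg (u 0) a < 0 → ∀ t ∈ Set.Icc (0:ℝ) T, divg (u t) (X t) < 0) := by
  have hder : ∀ t ∈ Set.Icc (0:ℝ) T,
      HasDerivAt (fun s => divg (u s) (X s)) (-gradNormSq (u t) (X t)) t :=
    fun t ht => hasDerivAt_divg_trajectory hreg hB hcf ht (hX t ht)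
  have hcont : ContinuousOn (fun s => gradNormSq (u s) (X s)) (Set.Icc (0:ℝ) T) :=
    continuousOn_gradNormSq_trajectory hreg
      fun t ht => (hX t ht).continuousAt.continuousWithinAt
  have hanti : AntitoneOn (fun t => divg (u t) (X t)) (Set.Icc (0:ℝ) T) := by
    refine antitoneOn_of_deriv_nonpos (convex_Icc 0 T)
      (fun t ht => (hder t ht).continuousAt.continuousWithinAt)
      (fun t ht => (hder t (interior_subset ht)).differentiableAt.differentiableWithinAt)
      (fun t ht => ?_)
    rw [(hder t (interior_subset ht)).deriv]
    exact neg_nonpos.mpr (gradNormSq_nonneg _ _)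
  refine ⟨fun t ht => ?_, hanti, fun hneg t ht => ?_⟩
  · have hsub : Set.uIcc 0 t ⊆ Set.Icc (0:ℝ) T := by
      rw [Set.uIcc_of_le ht.1]
      exact Set.Icc_subset_Icc_right ht.2
    have h := integral_eq_sub_of_hasDerivAt (fun s hs => hder s (hsub hs))
      ((hcont.mono hsub).neg.intervalIntegrable)
    rw [intervalIntegral.integral_neg, hX0] at h
    linarith
  · have h := hanti (Set.left_mem_Icc.mpr hT) ht ht.1
    simp only [hX0] at h
    exact h.trans_lt hneg
end
end

section
/- Let λ > 0 and let u : [0,T] × ℝ² → ℝ² be smooth, 2π-periodic in each spatial coordinate, and a pointwise solution of the 2D Kuramoto–Sivashinsky equation ∂ₜu + (u·∇)u = −Δ²u − λΔu. Let δ₊*(s) = sup_{x ∈ Ω} max(∇·u(s,x), 0). Then for all t ∈ [0,T], ‖u(t)‖²_{L²(Ω)} ≤ exp( λ² t + ∫₀ᵗ δ₊*(s) ds ) · ‖u(0)‖²_{L²(Ω)}. -/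
/-!
This is the classical `L²` energy estimate. Write `E(t) = ‖u(t)‖²`. Pairing the equation with `2u`
expresses the rate `E' = 2 ∫ u·∂ₜu` through the terms below, in which the divergences of periodic
fields integrate to zero over `Ω`:

* `-2 u·(u·∇)u = (∇·u)|u|² - ∂₁(u¹|u|²) - ∂₂(u²|u|²)`;
* `-2 uⁱ Δ²uⁱ = -2 (Δuⁱ)² - 2 ∇·(uⁱ∇Δuⁱ - Δuⁱ∇uⁱ)`, which is Green's identity.

Completing the square pointwise, `-2(Δuⁱ)² - 2λ uⁱΔuⁱ ≤ λ² (uⁱ)²`, so that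
`E' ≤ (λ² + δ₊*) E` (`energy_rate_le`). Since `∇·u` is jointly continuous and `Ω` is compact, `δ₊*`
is continuous in time, and the integrating factor `exp(-λ²t - ∫₀ᵗ δ₊*)` makes the energy
nonincreasing.
-/

open Real MeasureTheory Set intervalIntegral
open scoped Real Classical

noncomputable section

/-! ### Smooth periodic scalar fields -/

/-- Smooth scalar fields on `ℝ²` that are `2π`-periodic in each coordinate. -/
structure SmoothPer (f : ℝ × ℝ → ℝ) : Prop where
  smooth : ContDiff ℝ (⊤ : ℕ∞) f
  per1 : ∀ x : ℝ × ℝ, f (x.1 + 2 * π, x.2) = f x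
  per2 : ∀ x : ℝ × ℝ, f (x.1, x.2 + 2 * π) = f x

lemma hasDerivAt_pd1 {f : ℝ × ℝ → ℝ} (hf : Differentiable ℝ f) (x : ℝ × ℝ) :
    HasDerivAt (fun s => f (s, x.2)) (fderiv ℝ f x (1, 0)) x.1 := by
  have h : HasDerivAt (fun s : ℝ => ((s, x.2) : ℝ × ℝ)) (1, 0) x.1 :=
    (hasDerivAt_id x.1).prodMk (hasDerivAt_const x.1 x.2)
  exact (hf x).hasFDerivAt.comp_hasDerivAt x.1 h

lemma hasDerivAt_pd2 {f : ℝ × ℝ → ℝ} (hf : Differentiable ℝ f) (x : ℝ × ℝ) :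
    HasDerivAt (fun s => f (x.1, s)) (fderiv ℝ f x (0, 1)) x.2 := by
  have h : HasDerivAt (fun s : ℝ => ((x.1, s) : ℝ × ℝ)) (0, 1) x.2 :=
    (hasDerivAt_const x.2 x.1).prodMk (hasDerivAt_id x.2)
  exact (hf x).hasFDerivAt.comp_hasDerivAt x.2 h

lemma pd1_eq {f : ℝ × ℝ → ℝ} (hf : Differentiable ℝ f) :
    pd1 f = fun x => fderiv ℝ f x (1, 0) :=
  funext fun x => (hasDerivAt_pd1 hf x).deriv

lemma pd2_eq {f : ℝ × ℝ → ℝ} (hf : Differentiable ℝ f) :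
    pd2 f = fun x => fderiv ℝ f x (0, 1) :=
  funext fun x => (hasDerivAt_pd2 hf x).deriv

namespace SmoothPer

variable {f g : ℝ × ℝ → ℝ}

lemma diff (hf : SmoothPer f) : Differentiable ℝ f :=
  hf.smooth.differentiable (by simp)

lemma cont (hf : SmoothPer f) : Continuous f := hf.smooth.continuous

lemma add (hf : SmoothPer f) (hg : SmoothPer g) : SmoothPer (fun x => f x + g x) :=
  ⟨hf.smooth.add hg.smooth, fun x => by rw [hf.per1, hg.per1],
    fun x => by rw [hf.per2, hg.per2]⟩

lemma sub (hf : SmoothPer f) (hg : SmoothPer g) : SmoothPer (fun x => f x - g x) :=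
  ⟨hf.smooth.sub hg.smooth, fun x => by rw [hf.per1, hg.per1],
    fun x => by rw [hf.per2, hg.per2]⟩

lemma mul (hf : SmoothPer f) (hg : SmoothPer g) : SmoothPer (fun x => f x * g x) :=
  ⟨hf.smooth.mul hg.smooth, fun x => by rw [hf.per1, hg.per1],
    fun x => by rw [hf.per2, hg.per2]⟩

lemma pd1 (hf : SmoothPer f) : SmoothPer (pd1 f) where
  smooth := by
    rw [pd1_eq hf.diff]
    exact (contDiff_infty_iff_fderiv.1 hf.smooth).2.clm_apply contDiff_const
  per1 x := by
    have h : (fun s => f (s + 2 * π, x.2)) = fun s => f (s, x.2) :=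
      funext fun s => hf.per1 (s, x.2)
    simp only [_root_.pd1]
    rw [← deriv_comp_add_const (fun s => f (s, x.2)), h]
  per2 x := by
    have h : (fun s => f (s, x.2 + 2 * π)) = fun s => f (s, x.2) :=
      funext fun s => hf.per2 (s, x.2)
    simp only [_root_.pd1, h]

lemma pd2 (hf : SmoothPer f) : SmoothPer (pd2 f) where
  smooth := by
    rw [pd2_eq hf.diff]
    exact (contDiff_infty_iff_fderiv.1 hf.smooth).2.clm_apply contDiff_const
  per1 x := by
    have h : (fun s => f (x.1 + 2 * π, s)) = fun s => f (x.1, s) :=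
      funext fun s => hf.per1 (x.1, s)
    simp only [_root_.pd2, h]
  per2 x := by
    have h : (fun s => f (x.1, s + 2 * π)) = fun s => f (x.1, s) :=
      funext fun s => hf.per2 (x.1, s)
    simp only [_root_.pd2]
    rw [← deriv_comp_add_const (fun s => f (x.1, s)), h]

lemma lap (hf : SmoothPer f) : SmoothPer (lap f) := hf.pd1.pd1.add hf.pd2.pd2

lemma pd1_mul (hf : SmoothPer f) (hg : SmoothPer g) (x : ℝ × ℝ) :
    _root_.pd1 (fun y => f y * g y) x = _root_.pd1 f x * g x + f x * _root_.pd1 g x :=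
  deriv_fun_mul (hasDerivAt_pd1 hf.diff x).differentiableAt
    (hasDerivAt_pd1 hg.diff x).differentiableAt

lemma pd2_mul (hf : SmoothPer f) (hg : SmoothPer g) (x : ℝ × ℝ) :
    _root_.pd2 (fun y => f y * g y) x = _root_.pd2 f x * g x + f x * _root_.pd2 g x :=
  deriv_fun_mul (hasDerivAt_pd2 hf.diff x).differentiableAt
    (hasDerivAt_pd2 hg.diff x).differentiableAt

lemma pd1_add (hf : SmoothPer f) (hg : SmoothPer g) (x : ℝ × ℝ) :
    _root_.pd1 (fun y => f y + g y) x = _root_.pd1 f x + _root_.pd1 g x :=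
  deriv_fun_add (hasDerivAt_pd1 hf.diff x).differentiableAt
    (hasDerivAt_pd1 hg.diff x).differentiableAt

lemma pd2_add (hf : SmoothPer f) (hg : SmoothPer g) (x : ℝ × ℝ) :
    _root_.pd2 (fun y => f y + g y) x = _root_.pd2 f x + _root_.pd2 g x :=
  deriv_fun_add (hasDerivAt_pd2 hf.diff x).differentiableAt
    (hasDerivAt_pd2 hg.diff x).differentiableAt

lemma pd1_sub (hf : SmoothPer f) (hg : SmoothPer g) (x : ℝ × ℝ) :
    _root_.pd1 (fun y => f y - g y) x = _root_.pd1 f x - _root_.pd1 g x :=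
  deriv_fun_sub (hasDerivAt_pd1 hf.diff x).differentiableAt
    (hasDerivAt_pd1 hg.diff x).differentiableAt

lemma pd2_sub (hf : SmoothPer f) (hg : SmoothPer g) (x : ℝ × ℝ) :
    _root_.pd2 (fun y => f y - g y) x = _root_.pd2 f x - _root_.pd2 g x :=
  deriv_fun_sub (hasDerivAt_pd2 hf.diff x).differentiableAt
    (hasDerivAt_pd2 hg.diff x).differentiableAt

end SmoothPer

/-! ### Integration over the periodic box -/

lemma isCompact_Omega2 : IsCompact Omega2 := isCompact_Icc.prod isCompact_Icc

lemma measurableSet_Omega2 : MeasurableSet Omega2 := isCompact_Omega2.measurableSet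

lemma integrableOn_Omega2 {f : ℝ × ℝ → ℝ} (hf : Continuous f) : IntegrableOn f Omega2 :=
  hf.continuousOn.integrableOn_compact isCompact_Omega2

lemma integral_pd2_eq_zero {f : ℝ × ℝ → ℝ} (hf : SmoothPer f) :
    ∫ x in Omega2, pd2 f x = 0 := by
  have hi := integrableOn_Omega2 hf.pd2.cont
  rw [Omega2, Measure.volume_eq_prod] at hi ⊢
  rw [setIntegral_prod _ hi]
  have h0 : ∀ a : ℝ, ∫ b in Icc (0:ℝ) (2 * π), pd2 f (a, b) = 0 := by
    intro a
    rw [integral_Icc_eq_integral_Ioc, ← intervalIntegral.integral_of_le (by positivity),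
      intervalIntegral.integral_eq_sub_of_hasDerivAt (f := fun b => f (a, b))
        (f' := fun b => pd2 f (a, b))
        (fun b _ => (hasDerivAt_pd2 hf.diff (a, b)).differentiableAt.hasDerivAt)]
    · have := hf.per2 (a, 0)
      simp only [zero_add] at this
      simp [this]
    · exact (hf.pd2.cont.comp (by fun_prop : Continuous fun b : ℝ => (a, b))).intervalIntegrable _ _
  simp [h0]

lemma integral_pd1_eq_zero {f : ℝ × ℝ → ℝ} (hf : SmoothPer f) :
    ∫ x in Omega2, pd1 f x = 0 := by
  have hswap : SmoothPer (fun z => f z.swap) :=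
    ⟨hf.smooth.comp (contDiff_snd.prodMk contDiff_fst), fun x => hf.per2 x.swap,
      fun x => hf.per1 x.swap⟩
  have h := integral_pd2_eq_zero hswap
  rw [Omega2, Measure.volume_eq_prod] at h ⊢
  rw [← setIntegral_prod_swap]
  exact h

/-- The divergence theorem on the torus. -/
lemma integral_div_eq_zero {f g : ℝ × ℝ → ℝ} (hf : SmoothPer f) (hg : SmoothPer g) :
    ∫ x in Omega2, (pd1 f x + pd2 g x) = 0 := by
  rw [integral_add (integrableOn_Omega2 hf.pd1.cont) (integrableOn_Omega2 hg.pd2.cont),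
    integral_pd1_eq_zero hf, integral_pd2_eq_zero hg, add_zero]

/-- Green's identity: the bilaplacian paired with `f` is the square of the Laplacian. -/
lemma integral_bilaplacian {f : ℝ × ℝ → ℝ} (hf : SmoothPer f) :
    ∫ x in Omega2, (f x * lap (lap f) x - lap f x * lap f x) = 0 := by
  have hL := hf.lap
  rw [← integral_div_eq_zero ((hf.mul hL.pd1).sub (hL.mul hf.pd1))
    ((hf.mul hL.pd2).sub (hL.mul hf.pd2))]
  congr 1
  funext x
  rw [SmoothPer.pd1_sub (hf.mul hL.pd1) (hL.mul hf.pd1),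
    SmoothPer.pd2_sub (hf.mul hL.pd2) (hL.mul hf.pd2),
    hf.pd1_mul hL.pd1, hL.pd1_mul hf.pd1, hf.pd2_mul hL.pd2, hL.pd2_mul hf.pd2,
    show lap (lap f) x = pd1 (pd1 (lap f)) x + pd2 (pd2 (lap f)) x from rfl,
    show lap f x * lap f x = lap f x * (pd1 (pd1 f) x + pd2 (pd2 f) x) from rfl]
  ring

/-- The transport term tested against `2(a, b)` is minus the divergence weighted by `|(a, b)|²`. -/
lemma integral_transport {a b : ℝ × ℝ → ℝ} (ha : SmoothPer a) (hb : SmoothPer b) :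
    ∫ x in Omega2, (2 * (a x * (a x * pd1 a x + b x * pd2 a x)
      + b x * (a x * pd1 b x + b x * pd2 b x))
      + (pd1 a x + pd2 b x) * (a x * a x + b x * b x)) = 0 := by
  have hq := (ha.mul ha).add (hb.mul hb)
  rw [← integral_div_eq_zero (ha.mul hq) (hb.mul hq)]
  congr 1
  funext x
  rw [ha.pd1_mul hq, hb.pd2_mul hq, SmoothPer.pd1_add (ha.mul ha) (hb.mul hb),
    SmoothPer.pd2_add (ha.mul ha) (hb.mul hb), ha.pd1_mul ha, hb.pd1_mul hb, ha.pd2_mul ha,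
    hb.pd2_mul hb]
  ring

/-- Differentiation under the integral sign over the compact box. -/
lemma hasDerivAt_integral_Omega2 {G G' : ℝ → ℝ × ℝ → ℝ} (hG : ∀ t, Continuous (G t))
    (hG' : Continuous fun p : ℝ × (ℝ × ℝ) => G' p.1 p.2)
    (hd : ∀ t x, HasDerivAt (fun s => G s x) (G' t x) t) (t : ℝ) :
    HasDerivAt (fun s => ∫ x in Omega2, G s x) (∫ x in Omega2, G' t x) t := by
  obtain ⟨C, hC⟩ := ((isCompact_Icc (a := t - 1) (b := t + 1)).prod
    isCompact_Omega2).exists_bound_of_continuousOn hG'.continuousOn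
  refine (hasDerivAt_integral_of_dominated_loc_of_deriv_le (bound := fun _ => C)
    (Icc_mem_nhds (show t - 1 < t by linarith) (show t < t + 1 by linarith))
    (Filter.Eventually.of_forall fun s => (hG s).aestronglyMeasurable)
    (integrableOn_Omega2 (hG t)) ?_ ?_ (integrableOn_Omega2 continuous_const) ?_).2
  · exact (hG'.comp (by fun_prop : Continuous fun x : ℝ × ℝ => (t, x))).aestronglyMeasurable
  · exact (ae_restrict_iff' measurableSet_Omega2).2
      (Filter.Eventually.of_forall fun x hx s hs => hC (s, x) ⟨hs, hx⟩)
  · exact Filter.Eventually.of_forall fun x s _ => hd s x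

/-! ### The energy inequality -/

/-- The energy differential inequality at a fixed time: `a, b` are the components of the field,
`a', b'` their time derivatives, and `d` any upper bound of the divergence on `Ω`. -/
lemma energy_rate_le {lam d : ℝ} {a b a' b' : ℝ × ℝ → ℝ} (ha : SmoothPer a) (hb : SmoothPer b)
    (hea : ∀ x, a' x + (a x * pd1 a x + b x * pd2 a x) = -lap (lap a) x - lam * lap a x)
    (heb : ∀ x, b' x + (a x * pd1 b x + b x * pd2 b x) = -lap (lap b) x - lam * lap b x)
    (hd : ∀ x ∈ Omega2, pd1 a x + pd2 b x ≤ d) :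
    ∫ x in Omega2, (2 * a x * a' x + 2 * b x * b' x)
      ≤ (lam ^ 2 + d) * ∫ x in Omega2, (a x ^ 2 + b x ^ 2) := by
  have hac := ha.cont
  have hbc := hb.cont
  have ha1 := ha.pd1.cont
  have ha2 := ha.pd2.cont
  have hb1 := hb.pd1.cont
  have hb2 := hb.pd2.cont
  have hla := ha.lap.cont
  have hlb := hb.lap.cont
  have hlla := ha.lap.lap.cont
  have hllb := hb.lap.lap.cont
  set N : ℝ × ℝ → ℝ := fun x => 2 * (a x * (a x * pd1 a x + b x * pd2 a x)
      + b x * (a x * pd1 b x + b x * pd2 b x))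
      + (pd1 a x + pd2 b x) * (a x * a x + b x * b x) with hN
  set Ga : ℝ × ℝ → ℝ := fun x => a x * lap (lap a) x - lap a x * lap a x with hGa
  set Gb : ℝ × ℝ → ℝ := fun x => b x * lap (lap b) x - lap b x * lap b x with hGb
  have iN : IntegrableOn N Omega2 := integrableOn_Omega2 (by fun_prop)
  have iGa : IntegrableOn Ga Omega2 := integrableOn_Omega2 (by fun_prop)
  have iGb : IntegrableOn Gb Omega2 := integrableOn_Omega2 (by fun_prop)
  -- What remains after removing the null terms `N`, `Ga`, `Gb`.
  set R : ℝ × ℝ → ℝ := fun x => (pd1 a x + pd2 b x) * (a x * a x + b x * b x)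
      - 2 * (lap a x * lap a x) - 2 * (lap b x * lap b x)
      - 2 * lam * (a x * lap a x + b x * lap b x) with hR
  have iR : IntegrableOn R Omega2 := integrableOn_Omega2 (by fun_prop)
  have hpt : (fun x => 2 * a x * a' x + 2 * b x * b' x)
      = fun x => R x - N x - 2 * Ga x - 2 * Gb x := by
    funext x
    simp only [hR, hN, hGa, hGb]
    linear_combination 2 * a x * hea x + 2 * b x * heb x
  have hint : ∫ x in Omega2, (2 * a x * a' x + 2 * b x * b' x) = ∫ x in Omega2, R x := by
    have iRN : IntegrableOn (fun x => R x - N x) Omega2 := iR.sub iN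
    have iRNG : IntegrableOn (fun x => R x - N x - 2 * Ga x) Omega2 := iRN.sub (iGa.const_mul 2)
    rw [hpt, MeasureTheory.integral_sub iRNG (iGb.const_mul 2),
      MeasureTheory.integral_sub iRN (iGa.const_mul 2), MeasureTheory.integral_sub iR iN,
      MeasureTheory.integral_const_mul, MeasureTheory.integral_const_mul, integral_transport ha hb,
      integral_bilaplacian ha, integral_bilaplacian hb]
    ring
  rw [hint, ← MeasureTheory.integral_const_mul]
  refine setIntegral_mono_on iR (integrableOn_Omega2 (by fun_prop)) measurableSet_Omega2
    fun x hx => ?_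
  simp only [hR]
  have h1 : (pd1 a x + pd2 b x) * (a x * a x + b x * b x) ≤ d * (a x * a x + b x * b x) :=
    mul_le_mul_of_nonneg_right (hd x hx) (add_nonneg (mul_self_nonneg _) (mul_self_nonneg _))
  nlinarith [sq_nonneg (lap a x + lam * a x), sq_nonneg (lap b x + lam * b x),
    sq_nonneg (lap a x), sq_nonneg (lap b x)]

/-- Grönwall's inequality on `[0, T]` with a continuous coefficient. -/
lemma gronwall_integrating_factor {E E' k : ℝ → ℝ} {T : ℝ} (hk : Continuous k)
    (hE : ∀ t, HasDerivAt E (E' t) t) (hle : ∀ t ∈ Icc (0:ℝ) T, E' t ≤ k t * E t) :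
    ∀ t ∈ Icc (0:ℝ) T, E t ≤ exp (∫ s in (0:ℝ)..t, k s) * E 0 := by
  intro t ht
  set K : ℝ → ℝ := fun t => ∫ s in (0:ℝ)..t, k s with hKdef
  have hK : ∀ t, HasDerivAt K (k t) t := fun t => hk.integral_hasStrictDerivAt 0 t |>.hasDerivAt
  have hF : ∀ t, HasDerivAt (fun t => exp (-K t) * E t)
      (exp (-K t) * -k t * E t + exp (-K t) * E' t) t :=
    fun t => (hK t).fun_neg.exp.mul (hE t)
  have hanti : AntitoneOn (fun t => exp (-K t) * E t) (Icc 0 T) := by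
    refine antitoneOn_of_hasDerivWithinAt_nonpos (convex_Icc 0 T)
      (fun s _ => (hF s).continuousAt.continuousWithinAt)
      (fun s _ => (hF s).hasDerivWithinAt) fun s hs => ?_
    nlinarith [hle s (interior_subset hs), exp_pos (-K s)]
  have h := hanti ⟨le_rfl, ht.1.trans ht.2⟩ ht ht.1
  have hK0 : K 0 = 0 := by simp [hKdef]
  simp only [hK0, neg_zero, exp_zero, one_mul] at h
  calc E t = exp (K t) * (exp (-K t) * E t) := by
        rw [← mul_assoc, ← exp_add]; simp
    _ ≤ exp (K t) * E 0 := mul_le_mul_of_nonneg_left h (exp_pos _).le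

/-! ### Fields depending on time -/

lemma contDiff_slice {F : ℝ × (ℝ × ℝ) → ℝ} (hF : ContDiff ℝ (⊤ : ℕ∞) F) (t : ℝ) :
    ContDiff ℝ (⊤ : ℕ∞) (fun x => F (t, x)) :=
  hF.comp (contDiff_const.prodMk contDiff_id)

lemma hasDerivAt_time {F : ℝ × (ℝ × ℝ) → ℝ} (hF : ContDiff ℝ (⊤ : ℕ∞) F) (t : ℝ) (x : ℝ × ℝ) :
    HasDerivAt (fun s => F (s, x)) (fderiv ℝ F (t, x) (1, 0)) t :=
  ((hF.differentiable (by simp)) (t, x)).hasFDerivAt.comp_hasDerivAt t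
    ((hasDerivAt_id t).prodMk (hasDerivAt_const t x))

lemma continuous_fderiv_apply {F : ℝ × (ℝ × ℝ) → ℝ} (hF : ContDiff ℝ (⊤ : ℕ∞) F)
    (v : ℝ × (ℝ × ℝ)) : Continuous fun p => fderiv ℝ F p v :=
  (hF.continuous_fderiv (by simp)).clm_apply continuous_const

lemma continuous_pd1_slice {F : ℝ × (ℝ × ℝ) → ℝ} (hF : ContDiff ℝ (⊤ : ℕ∞) F) :
    Continuous fun p : ℝ × (ℝ × ℝ) => pd1 (fun y => F (p.1, y)) p.2 := by
  refine (continuous_fderiv_apply hF (0, (1, 0))).congr fun p => ?_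
  have h : HasDerivAt (fun s : ℝ => (p.1, (s, p.2.2))) (0, (1, 0)) p.2.1 :=
    (hasDerivAt_const _ _).prodMk ((hasDerivAt_id _).prodMk (hasDerivAt_const _ _))
  exact (((hF.differentiable (by simp)) p).hasFDerivAt.comp_hasDerivAt p.2.1 h).deriv.symm

lemma continuous_pd2_slice {F : ℝ × (ℝ × ℝ) → ℝ} (hF : ContDiff ℝ (⊤ : ℕ∞) F) :
    Continuous fun p : ℝ × (ℝ × ℝ) => pd2 (fun y => F (p.1, y)) p.2 := by
  refine (continuous_fderiv_apply hF (0, (0, 1))).congr fun p => ?_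
  have h : HasDerivAt (fun s : ℝ => (p.1, (p.2.1, s))) (0, (0, 1)) p.2.2 :=
    (hasDerivAt_const _ _).prodMk ((hasDerivAt_const _ _).prodMk (hasDerivAt_id _))
  exact (((hF.differentiable (by simp)) p).hasFDerivAt.comp_hasDerivAt p.2.2 h).deriv.symm

/-- Energy bound for smooth periodic solutions of the 2D KSE in terms of the
supremum of the positive part of the divergence:
`‖u(t)‖²_{L²} ≤ exp(λ²t + ∫₀ᵗ δ₊*(s) ds)·‖u(0)‖²_{L²}`. -/
theorem stmt6 (lam T : ℝ) (hlam : 0 < lam) (hT : 0 ≤ T)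
    (u : ℝ → ℝ × ℝ → ℝ × ℝ) (hreg : SmoothTS u) (hper : ∀ t, Periodic2 (u t))
    (hKSE : IsKSE lam T u) :
    ∀ t ∈ Set.Icc (0:ℝ) T,
      l2sq (u t)
        ≤ Real.exp (lam^2 * t +
            ∫ s in (0:ℝ)..t, sSup ((fun x => max (divg (u s) x) 0) '' Omega2))
          * l2sq (u 0) := by
  have hu : ContDiff ℝ (⊤ : ℕ∞) (fun p : ℝ × (ℝ × ℝ) => u p.1 p.2) := contDiff_infty.2 hreg
  have hA : ContDiff ℝ (⊤ : ℕ∞) (fun p : ℝ × (ℝ × ℝ) => (u p.1 p.2).1) := hu.fst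
  have hB : ContDiff ℝ (⊤ : ℕ∞) (fun p : ℝ × (ℝ × ℝ) => (u p.1 p.2).2) := hu.snd
  have ha : ∀ t, SmoothPer (fun x => (u t x).1) := fun t =>
    ⟨contDiff_slice hA t, fun x => congrArg Prod.fst (hper t x).1,
      fun x => congrArg Prod.fst (hper t x).2⟩
  have hb : ∀ t, SmoothPer (fun x => (u t x).2) := fun t =>
    ⟨contDiff_slice hB t, fun x => congrArg Prod.snd (hper t x).1,
      fun x => congrArg Prod.snd (hper t x).2⟩
  have hdiv : Continuous fun p : ℝ × (ℝ × ℝ) => max (divg (u p.1) p.2) 0 :=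
    ((continuous_pd1_slice hA).add (continuous_pd2_slice hB)).max continuous_const
  set δ : ℝ → ℝ := fun s => sSup ((fun x => max (divg (u s) x) 0) '' Omega2) with hδ
  have hδc : Continuous δ :=
    isCompact_Omega2.continuous_sSup (f := fun s x => max (divg (u s) x) 0) hdiv
  have hdle : ∀ s, ∀ x ∈ Omega2, divg (u s) x ≤ δ s := by
    intro s x hx
    have hbdd : BddAbove ((fun x => max (divg (u s) x) 0) '' Omega2) :=
      isCompact_Omega2.bddAbove_image
        (hdiv.comp (by fun_prop : Continuous fun x : ℝ × ℝ => (s, x))).continuousOn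
    exact (le_max_left _ _).trans (le_csSup hbdd (mem_image_of_mem _ hx))
  set a' : ℝ → ℝ × ℝ → ℝ := fun t x => deriv (fun s => (u s x).1) t with ha'
  set b' : ℝ → ℝ × ℝ → ℝ := fun t x => deriv (fun s => (u s x).2) t with hb'
  have hda : ∀ t x, HasDerivAt (fun s => (u s x).1) (a' t x) t := fun t x =>
    (hasDerivAt_time hA t x).differentiableAt.hasDerivAt
  have hdb : ∀ t x, HasDerivAt (fun s => (u s x).2) (b' t x) t := fun t x =>
    (hasDerivAt_time hB t x).differentiableAt.hasDerivAt
  have hca : Continuous fun p : ℝ × (ℝ × ℝ) => a' p.1 p.2 :=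
    (continuous_fderiv_apply hA (1, 0)).congr fun p => (hasDerivAt_time hA p.1 p.2).deriv.symm
  have hcb : Continuous fun p : ℝ × (ℝ × ℝ) => b' p.1 p.2 :=
    (continuous_fderiv_apply hB (1, 0)).congr fun p => (hasDerivAt_time hB p.1 p.2).deriv.symm
  have hE : ∀ t, HasDerivAt (fun s => l2sq (u s))
      (∫ x in Omega2, (2 * (u t x).1 * a' t x + 2 * (u t x).2 * b' t x)) t := by
    refine hasDerivAt_integral_Omega2 (G := fun s x => (u s x).1 ^ 2 + (u s x).2 ^ 2)
      (G' := fun t x => 2 * (u t x).1 * a' t x + 2 * (u t x).2 * b' t x) ?_ ?_ ?_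
    · intro t
      exact ((ha t).cont.pow 2).add ((hb t).cont.pow 2)
    · exact ((continuous_const.mul hA.continuous).mul hca).add
        ((continuous_const.mul hB.continuous).mul hcb)
    · intro t x
      simpa using ((hda t x).fun_pow 2).fun_add ((hdb t x).fun_pow 2)
  have key := gronwall_integrating_factor (T := T) (k := fun s => lam ^ 2 + δ s)
    (continuous_const.add hδc) hE fun t ht =>
      energy_rate_le (ha t) (hb t) (fun x => (hKSE t ht x).1) (fun x => (hKSE t ht x).2) (hdle t)
  intro t ht
  have h := key t ht
  rw [intervalIntegral.integral_add intervalIntegrable_const (hδc.intervalIntegrable _ _),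
    intervalIntegral.integral_const, sub_zero, smul_eq_mul, mul_comm t] at h
  exact h
end
end
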